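/- Let B be a complex unital Banach algebra with submultiplicative norm, let A ∈ B be invertible, and let X₀ ∈ B commute with A. Set Y₀ = 1 − A⁻¹X₀² and assume ‖Y₀‖ < 1. Define the sequences Xₖ₊₁ = Xₖ(1 + (1/2)Yₖ) and Yₖ₊₁ = Yₖ²((3/4)·1 + (1/4)Yₖ). Then (Xₖ) converges to a limit L ∈ B satisfying L² = A and LA = AL. -/

import Mathlib

open Filter Topology

section SIAI

variable {B : Type*} [NormedRing B] [NormedAlgebra ℂ B]

/-- The residual of one step of the iteration, computed from the residual of the previous one. -/
lemma siai_residual_step (C x y : B) (hxy : Commute x y) (hy : y = 1 - C * x ^ 2) :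
    y ^ 2 * ((3/4 : ℂ) • (1 : B) + (1/4 : ℂ) • y)
      = 1 - C * (x * (1 + (1/2 : ℂ) • y)) ^ 2 := by
  have hcx : C * x ^ 2 = 1 - y := by rw [hy]; abel
  have hc : Commute x (1 + (1/2 : ℂ) • y) :=
    (Commute.one_right x).add_right (hxy.smul_right _)
  rw [hc.mul_pow, ← mul_assoc, hcx]
  simp only [pow_two, mul_add, add_mul, sub_mul, mul_one, one_mul, mul_smul_comm,
    smul_mul_assoc, mul_assoc]
  module

lemma norm_siai_residual_le (y : B) (hy : ‖y‖ ≤ 1) :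
    ‖y ^ 2 * ((3/4 : ℂ) • (1 : B) + (1/4 : ℂ) • y)‖ ≤ ‖y‖ ^ 2 := by
  have h : y ^ 2 * ((3/4 : ℂ) • (1 : B) + (1/4 : ℂ) • y)
      = (3/4 : ℂ) • (y * y) + (1/4 : ℂ) • (y * y * y) := by
    simp only [pow_two, mul_add, mul_one, mul_smul_comm]
  have h2 : ‖y * y‖ ≤ ‖y‖ * ‖y‖ := norm_mul_le _ _
  have h3 : ‖y * y * y‖ ≤ ‖y‖ * ‖y‖ :=
    (norm_mul_le _ _).trans ((mul_le_of_le_one_right (norm_nonneg _) hy).trans h2)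
  rw [h]
  refine (norm_add_le _ _).trans ?_
  rw [norm_smul, norm_smul]
  norm_num
  nlinarith

/-- The increment `x * y` shrinks by a factor proportional to the norm of the residual. -/
lemma norm_siai_increment_le (x y : B) (hy : ‖y‖ ≤ 1) :
    ‖x * (1 + (1/2 : ℂ) • y) * (y ^ 2 * ((3/4 : ℂ) • (1 : B) + (1/4 : ℂ) • y))‖
      ≤ 3/2 * ‖y‖ * ‖x * y‖ := by
  have h : x * (1 + (1/2 : ℂ) • y) * (y ^ 2 * ((3/4 : ℂ) • (1 : B) + (1/4 : ℂ) • y))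
      = (3/4 : ℂ) • (x * y * y) + (5/8 : ℂ) • (x * y * y * y)
        + (1/8 : ℂ) • (x * y * y * y * y) := by
    simp only [pow_two, mul_add, add_mul, mul_one, mul_smul_comm, smul_mul_assoc, mul_assoc]
    module
  have hmul (z : B) : ‖z * y‖ ≤ ‖z‖ :=
    (norm_mul_le _ _).trans (mul_le_of_le_one_right (norm_nonneg _) hy)
  have h2 : ‖x * y * y‖ ≤ ‖x * y‖ * ‖y‖ := norm_mul_le _ _
  have h3 := hmul (x * y * y)
  have h4 := hmul (x * y * y * y)
  rw [h]
  refine (norm_add₃_le).trans ?_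
  rw [norm_smul, norm_smul, norm_smul]
  norm_num
  nlinarith

lemma tendsto_siai_residual (Y : ℕ → B) (hsmall : ‖Y 0‖ < 1)
    (hY : ∀ k, Y (k + 1) = (Y k) ^ 2 * ((3/4 : ℂ) • (1 : B) + (1/4 : ℂ) • Y k)) :
    Tendsto Y atTop (𝓝 0) := by
  have hbound (k : ℕ) : ‖Y k‖ ≤ ‖Y 0‖ ^ (k + 1) := by
    induction k with
    | zero => simp
    | succ k ih =>
      have h0 : ‖Y k‖ ≤ ‖Y 0‖ :=
        ih.trans (pow_le_of_le_one (norm_nonneg _) hsmall.le k.succ_ne_zero)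
      rw [hY, pow_succ ‖Y 0‖]
      refine (norm_siai_residual_le _ (h0.trans hsmall.le)).trans ?_
      rw [pow_two]
      gcongr
  exact squeeze_zero_norm hbound
    ((tendsto_pow_atTop_nhds_zero_of_lt_one (norm_nonneg _) hsmall).comp (tendsto_add_atTop_nat 1))

lemma exists_tendsto_siai [CompleteSpace B] (X Y : ℕ → B) (hY0 : Tendsto Y atTop (𝓝 0))
    (hX : ∀ k, X (k + 1) = X k * (1 + (1/2 : ℂ) • Y k))
    (hY : ∀ k, Y (k + 1) = (Y k) ^ 2 * ((3/4 : ℂ) • (1 : B) + (1/4 : ℂ) • Y k)) :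
    ∃ L : B, Tendsto X atTop (𝓝 L) := by
  have hev : ∀ᶠ k in atTop, ‖Y k‖ < 1/3 :=
    (tendsto_zero_iff_norm_tendsto_zero.mp hY0).eventually_lt_const (by norm_num)
  have hsum : Summable fun k => X k * Y k := by
    refine summable_of_ratio_norm_eventually_le (r := 1/2) (by norm_num) ?_
    filter_upwards [hev] with k hk
    rw [hX, hY]
    refine (norm_siai_increment_le _ _ (by linarith)).trans ?_
    gcongr
    linarith
  have hpartial (n : ℕ) : X n = X 0 + (1/2 : ℂ) • ∑ k ∈ Finset.range n, X k * Y k := by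
    induction n with
    | zero => simp
    | succ n ih =>
      rw [Finset.sum_range_succ, smul_add, ← add_assoc, ← ih, hX, mul_add, mul_one, mul_smul_comm]
  refine ⟨X 0 + (1/2 : ℂ) • ∑' k, X k * Y k, ?_⟩
  exact ((hsum.hasSum.tendsto_sum_nat.const_smul (1/2 : ℂ)).const_add (X 0)).congr
    fun n => (hpartial n).symm

end SIAI

/-- Convergence of the SIAI iteration in a complex Banach algebra: starting from
`X₀` commuting with the invertible element `A` with residual `Y₀ = 1 - A⁻¹X₀²`
of norm less than one, the iterates `Xₖ₊₁ = Xₖ(1 + (1/2)Yₖ)`,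
`Yₖ₊₁ = Yₖ²((3/4)·1 + (1/4)Yₖ)` converge to a square root of `A` commuting with `A`. -/
theorem siai_converges_to_square_root {B : Type*} [NormedRing B]
    [NormedAlgebra ℂ B] [CompleteSpace B]
    (A : B) [Invertible A] (X Y : ℕ → B)
    (hcomm : A * X 0 = X 0 * A)
    (hY0 : Y 0 = 1 - ⅟A * (X 0) ^ 2)
    (hsmall : ‖Y 0‖ < 1)
    (hX : ∀ k, X (k + 1) = X k * (1 + (1/2 : ℂ) • Y k))
    (hY : ∀ k, Y (k + 1) = (Y k) ^ 2 * ((3/4 : ℂ) • (1 : B) + (1/4 : ℂ) • Y k)) :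
    ∃ L : B, Filter.Tendsto X Filter.atTop (nhds L) ∧ L ^ 2 = A ∧ L * A = A * L := by
  have hinv (k : ℕ) : Commute A (X k) ∧ Y k = 1 - ⅟A * (X k) ^ 2 := by
    induction k with
    | zero => exact ⟨hcomm, hY0⟩
    | succ k ih =>
      obtain ⟨hAX, hYk⟩ := ih
      have hiX : Commute (⅟A) (X k) := hAX.invOf_left
      have hAi : Commute A (⅟A) := (Commute.refl A).invOf_right
      have hXY : Commute (X k) (Y k) := by
        rw [hYk]
        exact (Commute.one_right _).sub_right
          (hiX.symm.mul_right ((Commute.refl _).pow_right 2))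
      have hAY : Commute A (Y k) := by
        rw [hYk]
        exact (Commute.one_right _).sub_right (hAi.mul_right (hAX.pow_right 2))
      refine ⟨?_, ?_⟩
      · rw [hX]
        exact hAX.mul_right ((Commute.one_right _).add_right (hAY.smul_right _))
      · rw [hY, hX]
        exact siai_residual_step _ _ _ hXY hYk
  have hYlim := tendsto_siai_residual Y hsmall hY
  obtain ⟨L, hL⟩ := exists_tendsto_siai X Y hYlim hX hY
  have hsq (k : ℕ) : (X k) ^ 2 = A * (1 - Y k) := by
    rw [(hinv k).2, sub_sub_cancel, mul_invOf_cancel_left]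
  refine ⟨L, hL, ?_, ?_⟩
  · have hlim : Tendsto (fun k => (X k) ^ 2) atTop (𝓝 (A * (1 - 0))) := by
      simp only [hsq]
      exact (hYlim.const_sub 1).const_mul A
    rw [sub_zero, mul_one] at hlim
    exact tendsto_nhds_unique (hL.pow 2) hlim
  · refine tendsto_nhds_unique (hL.mul_const A) ?_
    simpa only [fun k => (hinv k).1.eq] using hL.const_mul A
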